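/- Suppose a self-adjoint operator H on ℓ²(ℤ) has SULE, with complete orthonormal set of eigenfunctions {φ_s}, centers n_s, and for each s let m_s ∈ ℤ be a global maximum of |φ_s|. Then the centers of localization are uniformly distributed: limsup_{L→∞} #{s : |m_s| ≤ L}/(2L+1) = liminf_{L→∞} #{s : |m_s| ≤ L}/(2L+1) = 1. -/

import Mathlib

noncomputable section

open Filter Real

def distToInt (x : ℝ) : ℝ := |x - round x|

def IsDiophantine (α : ℝ) : Prop :=
  ∃ κ τ : ℝ, 0 < κ ∧ 0 < τ ∧ ∀ k : ℤ, k ≠ 0 → τ / |(k : ℝ)| ^ κ ≤ distToInt (k * α)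

def deltaPhase (α θ : ℝ) : ℝ :=
  limsup (fun n : ℤ => -Real.log (distToInt (2 * θ + n * α)) / |(n : ℝ)|) cofinite

def amoPot (lam α θ : ℝ) : ℤ → ℝ := fun n => 2 * lam * Real.cos (2 * Real.pi * (θ + n * α))

def IsEigenfunction (g : ℤ → ℝ) (E : ℝ) (φ : ℤ → ℝ) : Prop :=
  ∀ n : ℤ, φ (n + 1) + φ (n - 1) + g n * φ n = E * φ n

def deltaPot (g : ℤ → ℝ) : ℝ :=
  limsup (fun n : ℤ => -Real.log (⨆ m : ℤ, |g (n - m) - g m|) / |(n : ℝ)|) cofinite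

def matNorm (M : Matrix (Fin 2) (Fin 2) ℝ) : ℝ := ⨆ p : Fin 2 × Fin 2, |M p.1 p.2|

def transfer (g : ℤ → ℝ) (E : ℝ) : ℕ → ℤ → Matrix (Fin 2) (Fin 2) ℝ
  | 0, _ => 1
  | n + 1, k => !![E - g (k + n), -1; 1, 0] * transfer g E n k

def LyapSup (g : ℤ → ℝ) (E : ℝ) : ℝ :=
  limsup (fun n : ℕ => ⨆ k : ℤ, Real.log (matNorm (transfer g E n k)) / n) atTop

def HasSULE (g : ℤ → ℝ) : Prop :=
  ∃ (Φ : HilbertBasis ℕ ℝ (lp (fun _ : ℤ => ℝ) 2)) (ns : ℕ → ℤ) (γ : ℝ),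
    0 < γ ∧
    (∀ s : ℕ, ∃ E : ℝ, IsEigenfunction g E (fun n => Φ s n)) ∧
    ∀ ε : ℝ, 0 < ε → ∃ C : ℝ,
      ∀ (s : ℕ) (n : ℤ),
        |Φ s n| ≤ C * Real.exp (ε * |(ns s : ℝ)|) * Real.exp (-γ * |(n : ℝ) - (ns s : ℝ)|)

open scoped ENNReal

theorem aux_summable_int (c : ℝ) (hc : 0 < c) : Summable (fun n : ℤ => Real.exp (-c * |(n : ℝ)|)) := by
  have h : Summable (fun n : ℕ => Real.exp (-c * (n : ℝ))) := by
    have := Real.summable_exp_nat_mul_iff.mpr (show -c < 0 by linarith)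
    refine this.congr ?_
    intro n
    rw [mul_comm]
  apply Summable.of_nat_of_neg
  · simpa using h
  · simpa using h

theorem aux_shift (c : ℝ) (hc : 0 < c) (k : ℤ) :
    HasSum (fun n : ℤ => Real.exp (-c * |(n : ℝ) - (k : ℝ)|)) (∑' n : ℤ, Real.exp (-c * |(n : ℝ)|)) := by
  have h := (aux_summable_int c hc).hasSum
  have := (Equiv.subRight k).hasSum_iff.mpr h
  simpa [Function.comp_def] using this

theorem aux_row (f : lp (fun _ : ℤ => ℝ) 2) (hf : ‖f‖ = 1) : HasSum (fun n : ℤ => (f n) ^ 2) 1 := by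
  have h := lp.hasSum_inner (𝕜 := ℝ) f f
  rw [real_inner_self_eq_norm_sq, hf] at h
  simpa [pow_two] using h

theorem aux_col (Φ : HilbertBasis ℕ ℝ (lp (fun _ : ℤ => ℝ) 2)) (n : ℤ) :
    HasSum (fun s : ℕ => (Φ s n) ^ 2) 1 := by
  have h := Φ.hasSum_inner_mul_inner (lp.single 2 n (1:ℝ)) (lp.single 2 n (1:ℝ))
  simpa [lp.inner_single_left, lp.inner_single_right, pow_two] using h

theorem aux_center
    (Φ : HilbertBasis ℕ ℝ (lp (fun _ : ℤ => ℝ) 2)) (ns : ℕ → ℤ) (γ : ℝ)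
    (hγ : 0 < γ)
    (hSULE : ∀ ε : ℝ, 0 < ε → ∃ C : ℝ, ∀ (s : ℕ) (n : ℤ),
      |Φ s n| ≤ C * Real.exp (ε * |(ns s : ℝ)|) * Real.exp (-γ * |(n : ℝ) - (ns s : ℝ)|))
    (m : ℕ → ℤ) (hm : ∀ (s : ℕ) (n : ℤ), |Φ s n| ≤ |Φ s (m s)|) (η : ℝ) (hη : 0 < η) :
    ∃ D : ℝ, 0 < D ∧ (∀ (s : ℕ) (n : ℤ),
      |Φ s n| ≤ D * Real.exp (η * |(m s : ℝ)|) * Real.exp (-γ * |(n : ℝ) - (m s : ℝ)|)) ∧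
      ∀ s : ℕ, 1 ≤ D * Real.exp (η * |(m s : ℝ)|) * |Φ s (m s)| := by
  set ε := min (γ / 4) (η / 6) with hε
  have hε0 : 0 < ε := by positivity
  have hε1 : ε ≤ γ / 4 := min_le_left _ _
  have hε2 : ε ≤ η / 6 := min_le_right _ _
  obtain ⟨C0, hC0⟩ := hSULE ε hε0
  set C := max C0 1 with hCdef
  have hC1 : 1 ≤ C := le_max_right _ _
  have hC : ∀ (s : ℕ) (n : ℤ),
      |Φ s n| ≤ C * Real.exp (ε * |(ns s : ℝ)|) * Real.exp (-γ * |(n : ℝ) - (ns s : ℝ)|) := by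
    intro s n
    refine (hC0 s n).trans ?_
    gcongr
    exact le_max_left _ _
  set K := ∑' n : ℤ, Real.exp (-γ * |(n : ℝ)|) with hK
  have hK1 : 1 ≤ K := by
    have := (aux_summable_int γ hγ).le_tsum 0 (fun _ _ => (Real.exp_pos _).le)
    rw [hK]
    simpa using this
  have h1 : ∀ s, 1 ≤ C * K * Real.exp (ε * |(ns s : ℝ)|) * |Φ s (m s)| := by
    intro s
    have hr := aux_row (Φ s) (Φ.orthonormal.1 s)
    have hs := (aux_shift γ hγ (ns s)).mul_left (|Φ s (m s)| * (C * Real.exp (ε * |(ns s : ℝ)|)))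
    have := hasSum_le (fun n => ?_) hr hs
    · calc (1:ℝ) ≤ _ := this
        _ = _ := by ring
    · have h2 := hC s n
      have h3 := hm s n
      calc (Φ s n)^2 = |Φ s n| * |Φ s n| := by rw [← sq_abs]; ring
        _ ≤ |Φ s (m s)| * (C * Real.exp (ε * |(ns s : ℝ)|) * Real.exp (-γ * |(n : ℝ) - (ns s : ℝ)|)) := by
          gcongr
        _ = _ := by ring
  set G := C ^ 2 * K with hG
  have hG1 : 1 ≤ G := by
    have : 1 ≤ C ^ 2 := one_le_pow₀ hC1
    nlinarith
  have h2 : ∀ s, Real.exp (γ * |(m s : ℝ) - (ns s : ℝ)|) ≤ G * Real.exp (2 * ε * |(ns s : ℝ)|) := by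
    intro s
    have a := h1 s
    have b := hC s (m s)
    have c : 1 ≤ C * K * Real.exp (ε * |(ns s : ℝ)|) * (C * Real.exp (ε * |(ns s : ℝ)|) * Real.exp (-γ * |(m s : ℝ) - (ns s : ℝ)|)) :=
      a.trans (by gcongr)
    have d : Real.exp (2 * ε * |(ns s : ℝ)|) = Real.exp (ε * |(ns s : ℝ)|) * Real.exp (ε * |(ns s : ℝ)|) := by
      rw [← Real.exp_add]; ring_nf
    have e : Real.exp (-γ * |(m s : ℝ) - (ns s : ℝ)|) * Real.exp (γ * |(m s : ℝ) - (ns s : ℝ)|) = 1 := by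
      rw [← Real.exp_add]; simp
    have f := mul_le_mul_of_nonneg_right c (Real.exp_pos (γ * |(m s : ℝ) - (ns s : ℝ)|)).le
    rw [one_mul] at f
    refine f.trans (le_of_eq ?_)
    rw [d, hG]
    linear_combination (C ^ 2 * K * Real.exp (ε * |(ns s : ℝ)|) ^ 2) * e
  set C1 := 2 * Real.log G / γ with hC1d
  have h3 : ∀ s, |(ns s : ℝ)| ≤ 2 * |(m s : ℝ)| + C1 := by
    intro s
    have a := Real.log_le_log (Real.exp_pos _) (h2 s)
    rw [Real.log_exp, Real.log_mul (by positivity) (by positivity), Real.log_exp] at a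
    have b : |(ns s : ℝ)| ≤ |(m s : ℝ)| + |(m s : ℝ) - (ns s : ℝ)| := by
      have := abs_sub_abs_le_abs_sub (ns s : ℝ) (m s : ℝ)
      rw [abs_sub_comm] at this
      linarith
    have c : 2 * ε * |(ns s : ℝ)| ≤ γ / 2 * |(ns s : ℝ)| := by
      gcongr; linarith
    have d : C1 * γ = 2 * Real.log G := by rw [hC1d]; field_simp
    have e : γ * |(ns s : ℝ)| ≤ γ * (2 * |(m s : ℝ)| + C1) := by nlinarith
    exact le_of_mul_le_mul_left e hγ
  have h4 : ∀ s, Real.exp (3 * ε * |(ns s : ℝ)|) ≤ Real.exp (3 * ε * C1) * Real.exp (η * |(m s : ℝ)|) := by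
    intro s
    rw [← Real.exp_add]
    apply Real.exp_le_exp.mpr
    have := mul_le_mul_of_nonneg_left (h3 s) (show 0 ≤ 3 * ε by positivity)
    have h' : 6 * ε * |(m s : ℝ)| ≤ η * |(m s : ℝ)| := by gcongr; linarith
    linarith
  refine ⟨C * G * Real.exp (3 * ε * C1), by positivity, ?_, ?_⟩
  · intro s n
    have a : Real.exp (-γ * |(n : ℝ) - (ns s : ℝ)|) ≤
        Real.exp (γ * |(m s : ℝ) - (ns s : ℝ)|) * Real.exp (-γ * |(n : ℝ) - (m s : ℝ)|) := by
      rw [← Real.exp_add]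
      apply Real.exp_le_exp.mpr
      have := abs_sub_le (n:ℝ) (ns s : ℝ) (m s : ℝ)
      rw [abs_sub_comm (ns s : ℝ)] at this
      nlinarith
    have d : Real.exp (3 * ε * |(ns s : ℝ)|) = Real.exp (ε * |(ns s : ℝ)|) * Real.exp (2 * ε * |(ns s : ℝ)|) := by
      rw [← Real.exp_add]; ring_nf
    calc |Φ s n| ≤ C * Real.exp (ε * |(ns s : ℝ)|) * Real.exp (-γ * |(n : ℝ) - (ns s : ℝ)|) := hC s n
      _ ≤ C * Real.exp (ε * |(ns s : ℝ)|) * ((G * Real.exp (2 * ε * |(ns s : ℝ)|)) * Real.exp (-γ * |(n : ℝ) - (m s : ℝ)|)) := by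
        gcongr
        refine a.trans ?_
        gcongr
        exact h2 s
      _ = C * G * Real.exp (3 * ε * |(ns s : ℝ)|) * Real.exp (-γ * |(n : ℝ) - (m s : ℝ)|) := by rw [d]; ring
      _ ≤ C * G * (Real.exp (3 * ε * C1) * Real.exp (η * |(m s : ℝ)|)) * Real.exp (-γ * |(n : ℝ) - (m s : ℝ)|) := by
        gcongr
        exact h4 s
      _ = _ := by ring
  · intro s
    have a : Real.exp (ε * |(ns s : ℝ)|) ≤ Real.exp (3 * ε * |(ns s : ℝ)|) := by
      apply Real.exp_le_exp.mpr
      have := mul_nonneg hε0.le (abs_nonneg (ns s : ℝ))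
      linarith
    have b : C * K ≤ C * G := by
      gcongr
      rw [hG]
      have : 1 ≤ C ^ 2 := one_le_pow₀ hC1
      nlinarith
    calc 1 ≤ C * K * Real.exp (ε * |(ns s : ℝ)|) * |Φ s (m s)| := h1 s
      _ ≤ (C * G) * (Real.exp (3 * ε * C1) * Real.exp (η * |(m s : ℝ)|)) * |Φ s (m s)| := by
        gcongr
        exact a.trans (h4 s)
      _ = _ := by ring

theorem aux_tsum_eq {ι : Type*} (f : ι → ℝ) (x : ℝ) (h0 : ∀ i, 0 ≤ f i) (h : HasSum f x) :
    ∑' i, ENNReal.ofReal (f i) = ENNReal.ofReal x := by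
  rw [← h.tsum_eq, ENNReal.ofReal_tsum_of_nonneg h0 h.summable]

theorem aux_far
    (Φ : HilbertBasis ℕ ℝ (lp (fun _ : ℤ => ℝ) 2)) (ns : ℕ → ℤ) (γ : ℝ)
    (hγ : 0 < γ)
    (hSULE : ∀ ε : ℝ, 0 < ε → ∃ C : ℝ, ∀ (s : ℕ) (n : ℤ),
      |Φ s n| ≤ C * Real.exp (ε * |(ns s : ℝ)|) * Real.exp (-γ * |(n : ℝ) - (ns s : ℝ)|))
    (m : ℕ → ℤ) (hm : ∀ (s : ℕ) (n : ℤ), |Φ s n| ≤ |Φ s (m s)|) (δ : ℝ) (hδ : 0 < δ) :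
    ∃ e : ℕ → ℤ → ℝ≥0∞, ∑' s, ∑' n, e s n ≠ ∞ ∧
      ∀ (s : ℕ) (n : ℤ), δ * |(m s : ℝ)| ≤ |(n : ℝ) - (m s : ℝ)| → ENNReal.ofReal ((Φ s n) ^ 2) ≤ e s n := by
  set c := γ * δ / 2 with hc
  have hc0 : 0 < c := by positivity
  have hsum : ∑' s, ENNReal.ofReal (Real.exp (-c * |(m s : ℝ)|)) ≠ ∞ := by
    obtain ⟨D, hD, -, hD2⟩ := aux_center Φ ns γ hγ hSULE m hm (c / 4) (by positivity)
    set w : ℤ → ℝ := fun n => Real.exp (-(c/2) * |(n : ℝ)|) with hw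
    have hle : ∀ s, ENNReal.ofReal (Real.exp (-c * |(m s : ℝ)|)) ≤
        ∑' n : ℤ, ENNReal.ofReal (D ^ 2 * w n) * ENNReal.ofReal ((Φ s n) ^ 2) := by
      intro s
      refine le_trans ?_ (ENNReal.le_tsum (m s))
      rw [← ENNReal.ofReal_mul (by positivity)]
      apply ENNReal.ofReal_le_ofReal
      have h := one_le_pow₀ (hD2 s) (n := 2)
      have d : Real.exp (-c * |(m s : ℝ)|) * Real.exp (c / 4 * |(m s : ℝ)|) ^ 2 = w (m s) := by
        rw [hw, ← Real.exp_nat_mul, ← Real.exp_add]; push_cast; ring_nf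
      rw [mul_pow, mul_pow, sq_abs] at h
      calc Real.exp (-c * |(m s : ℝ)|) ≤ Real.exp (-c * |(m s : ℝ)|) * _ := le_mul_of_one_le_right (Real.exp_pos _).le h
        _ = _ := by rw [← d]; ring
    refine ne_top_of_le_ne_top ?_ (ENNReal.tsum_le_tsum hle)
    rw [ENNReal.tsum_comm]
    have : ∀ n : ℤ, ∑' s, ENNReal.ofReal (D ^ 2 * w n) * ENNReal.ofReal ((Φ s n) ^ 2) = ENNReal.ofReal (D ^ 2 * w n) := by
      intro n
      rw [ENNReal.tsum_mul_left, aux_tsum_eq _ 1 (fun _ => sq_nonneg _) (aux_col Φ n)]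
      simp
    simp_rw [this]
    rw [aux_tsum_eq _ _ (fun n => by positivity) (((aux_summable_int (c/2) (by positivity)).mul_left (D^2)).hasSum)]
    exact ENNReal.ofReal_ne_top
  obtain ⟨D, hD, hD1, -⟩ := aux_center Φ ns γ hγ hSULE m hm (γ * δ / 4) (by positivity)
  refine ⟨fun s n => ENNReal.ofReal (D ^ 2) * (ENNReal.ofReal (Real.exp (-c * |(m s : ℝ)|)) *
    ENNReal.ofReal (Real.exp (-γ * |(n : ℝ) - (m s : ℝ)|))), ?_, ?_⟩
  · simp_rw [ENNReal.tsum_mul_left]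
    have : ∀ s, ∑' n : ℤ, ENNReal.ofReal (Real.exp (-γ * |(n : ℝ) - (m s : ℝ)|)) = _ :=
      fun s => aux_tsum_eq _ _ (fun n => by positivity) (aux_shift γ hγ (m s))
    simp_rw [this, ENNReal.tsum_mul_right]
    exact ENNReal.mul_ne_top ENNReal.ofReal_ne_top (ENNReal.mul_ne_top hsum ENNReal.ofReal_ne_top)
  · intro s n h
    dsimp only
    rw [← ENNReal.ofReal_mul (by positivity), ← ENNReal.ofReal_mul (by positivity)]
    apply ENNReal.ofReal_le_ofReal
    have a := pow_le_pow_left₀ (abs_nonneg _) (hD1 s n) 2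
    rw [sq_abs, mul_pow, mul_pow, ← Real.exp_nat_mul, ← Real.exp_nat_mul] at a
    refine a.trans ?_
    rw [mul_assoc, ← Real.exp_add, ← Real.exp_add]
    refine mul_le_mul_of_nonneg_left (Real.exp_le_exp.mpr ?_) (by positivity)
    push_cast
    rw [hc]
    nlinarith

theorem aux_ind (S : Set ℕ) : ∑' s, S.indicator (fun _ => (1:ℝ≥0∞)) s = (S.encard : ℝ≥0∞) := by
  rw [← tsum_subtype]
  exact ENNReal.tsum_set_one S

theorem aux_indZ (M : ℕ) : ∑' n : ℤ, (Set.Icc (-(M:ℤ)) M).indicator (fun _ => (1:ℝ≥0∞)) n = ((2 * M + 1 : ℕ) : ℝ≥0∞) := by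
  rw [← tsum_subtype, ENNReal.tsum_set_one, ← Finset.coe_Icc, Set.encard_coe_eq_coe_finsetCard, Int.card_Icc]
  have : ((M:ℤ) + 1 - -(M:ℤ)).toNat = 2 * M + 1 := by omega
  rw [this]
  simp

theorem aux_bounds
    (Φ : HilbertBasis ℕ ℝ (lp (fun _ : ℤ => ℝ) 2)) (m : ℕ → ℤ) (δ : ℝ) (hδ : 0 < δ) (hδ1 : δ < 1)
    (e : ℕ → ℤ → ℝ≥0∞) (he : ∑' s, ∑' n, e s n ≠ ∞)
    (hfar : ∀ (s : ℕ) (n : ℤ), δ * |(m s : ℝ)| ≤ |(n : ℝ) - (m s : ℝ)| → ENNReal.ofReal ((Φ s n) ^ 2) ≤ e s n) (L : ℕ) :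
    |(Set.ncard {s : ℕ | |m s| ≤ (L : ℤ)} : ℝ) - (2 * L + 1)| ≤ 2 * δ * L + 2 + (∑' s, ∑' n, e s n).toReal := by
  set S := {s : ℕ | |m s| ≤ (L : ℤ)} with hS
  set a : ℕ → ℤ → ℝ≥0∞ := fun s n => ENNReal.ofReal ((Φ s n) ^ 2) with ha
  set E := ∑' s, ∑' n, e s n with hE
  have hcol : ∀ n, ∑' s, a s n = 1 := fun n => by
    simpa using aux_tsum_eq _ 1 (fun _ => sq_nonneg _) (aux_col Φ n)
  have hrow : ∀ s, ∑' n, a s n = 1 := fun s => by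
    simpa using aux_tsum_eq _ 1 (fun _ => sq_nonneg _) (aux_row (Φ s) (Φ.orthonormal.1 s))
  have rowS : ∑' s, ∑' n, S.indicator (fun _ => (1:ℝ≥0∞)) s * a s n = (S.encard : ℝ≥0∞) := by
    simp_rw [ENNReal.tsum_mul_left, hrow, mul_one]
    exact aux_ind S
  have colM : ∀ M : ℕ, ∑' s, ∑' n, (Set.Icc (-(M:ℤ)) M).indicator (fun _ => (1:ℝ≥0∞)) n * a s n = ((2 * M + 1 : ℕ) : ℝ≥0∞) := by
    intro M
    rw [ENNReal.tsum_comm]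
    simp_rw [ENNReal.tsum_mul_left, hcol, mul_one]
    exact aux_indZ M
  set M1 := ⌊(1 + δ) * L⌋₊ with hM1
  set M2 := ⌊(1 - δ) * L⌋₊ with hM2
  have hS' : ∀ s, s ∈ S ↔ |(m s : ℝ)| ≤ L := by
    intro s
    change |m s| ≤ (L : ℤ) ↔ _
    exact_mod_cast Iff.rfl
  have hM' : ∀ (M : ℕ) (n : ℤ), n ∈ Set.Icc (-(M:ℤ)) M ↔ |(n : ℝ)| ≤ M := by
    intro M n
    rw [Set.mem_Icc, ← abs_le]
    exact_mod_cast Iff.rfl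
  have hfl : ∀ (x : ℝ) (n : ℤ), 0 ≤ x → |(n:ℝ)| ≤ x → |(n : ℝ)| ≤ (⌊x⌋₊ : ℕ) := by
    intro x n hx h
    have : n.natAbs ≤ ⌊x⌋₊ := by
      apply Nat.le_floor
      rwa [Nat.cast_natAbs, Int.cast_abs]
    have h2 : ((n.natAbs : ℕ) : ℝ) ≤ (⌊x⌋₊ : ℕ) := by exact_mod_cast this
    rwa [Nat.cast_natAbs, Int.cast_abs] at h2
  have hL0 : (0:ℝ) ≤ L := Nat.cast_nonneg L
  have up : (S.encard : ℝ≥0∞) ≤ ((2 * M1 + 1 : ℕ) : ℝ≥0∞) + E := by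
    rw [← rowS, ← colM M1, hE, ← ENNReal.tsum_add]
    refine ENNReal.tsum_le_tsum fun s => ?_
    rw [← ENNReal.tsum_add]
    refine ENNReal.tsum_le_tsum fun n => ?_
    by_cases h1 : s ∈ S
    · by_cases h2 : n ∈ Set.Icc (-(M1:ℤ)) M1
      · simp [Set.indicator_of_mem h1, Set.indicator_of_mem h2]
      · rw [Set.indicator_of_mem h1, Set.indicator_of_notMem h2, one_mul, zero_mul, zero_add]
        apply hfar
        rw [hM'] at h2
        have h3 : (1 + δ) * L < |(n:ℝ)| := by
          by_contra! h
          exact h2 (hfl _ n (by positivity) h)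
        have h4 := (hS' s).1 h1
        have h5 := abs_sub_abs_le_abs_sub (n : ℝ) (m s : ℝ)
        nlinarith
    · simp [Set.indicator_of_notMem h1]
  have low : ((2 * M2 + 1 : ℕ) : ℝ≥0∞) ≤ (S.encard : ℝ≥0∞) + E := by
    rw [← rowS, ← colM M2, hE, ← ENNReal.tsum_add]
    refine ENNReal.tsum_le_tsum fun s => ?_
    rw [← ENNReal.tsum_add]
    refine ENNReal.tsum_le_tsum fun n => ?_
    by_cases h2 : n ∈ Set.Icc (-(M2:ℤ)) M2
    · by_cases h1 : s ∈ S
      · simp [Set.indicator_of_mem h1, Set.indicator_of_mem h2]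
      · rw [Set.indicator_of_mem h2, Set.indicator_of_notMem h1, one_mul, zero_mul, zero_add]
        apply hfar
        rw [hM'] at h2
        have h3 : |(n:ℝ)| ≤ (1 - δ) * L := h2.trans (Nat.floor_le (mul_nonneg (by linarith) hL0))
        have h4 : (L:ℝ) < |(m s : ℝ)| := by
          by_contra! h
          exact h1 ((hS' s).2 h)
        have h5 := abs_sub_abs_le_abs_sub (m s : ℝ) (n : ℝ)
        rw [abs_sub_comm] at h5
        nlinarith
    · simp [Set.indicator_of_notMem h2]
  have hfin : S.Finite := by
    rw [← Set.encard_ne_top_iff]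
    intro h
    rw [h] at up
    have : ((2 * M1 + 1 : ℕ) : ℝ≥0∞) + E ≠ ∞ := ENNReal.add_ne_top.2 ⟨ENNReal.natCast_ne_top _, he⟩
    exact this (top_le_iff.1 (by simpa using up))
  rw [← hfin.cast_ncard_eq] at up low
  have up' : (S.ncard : ℝ) ≤ ((2 * M1 + 1 : ℕ) : ℝ) + E.toReal := by
    have := ENNReal.toReal_mono (ENNReal.add_ne_top.2 ⟨ENNReal.natCast_ne_top _, he⟩) up
    rw [ENNReal.toReal_add (ENNReal.natCast_ne_top _) he, ENNReal.toReal_natCast] at this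
    simpa using this
  have low' : ((2 * M2 + 1 : ℕ) : ℝ) ≤ (S.ncard : ℝ) + E.toReal := by
    have := ENNReal.toReal_mono (ENNReal.add_ne_top.2 ⟨by simp, he⟩) low
    rw [ENNReal.toReal_add (by simp) he, ENNReal.toReal_natCast] at this
    simpa using this
  have f1 : (M1 : ℝ) ≤ (1 + δ) * L := Nat.floor_le (by positivity)
  have f2 : (1 - δ) * L < M2 + 1 := Nat.lt_floor_add_one _
  push_cast at up' low'
  rw [abs_le]
  constructor <;> nlinarith

theorem SULE_uniform_density_of_centers
    (H : lp (fun _ : ℤ => ℝ) 2 →L[ℝ] lp (fun _ : ℤ => ℝ) 2)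
    (hsa : IsSelfAdjoint H)
    (Φ : HilbertBasis ℕ ℝ (lp (fun _ : ℤ => ℝ) 2)) (ns : ℕ → ℤ) (γ : ℝ)
    (hγ : 0 < γ)
    (heig : ∀ s : ℕ, ∃ E : ℝ, H (Φ s) = E • (Φ s : lp (fun _ : ℤ => ℝ) 2))
    (hSULE : ∀ ε : ℝ, 0 < ε → ∃ C : ℝ, ∀ (s : ℕ) (n : ℤ),
      |Φ s n| ≤ C * Real.exp (ε * |(ns s : ℝ)|) * Real.exp (-γ * |(n : ℝ) - (ns s : ℝ)|))
    (m : ℕ → ℤ) (hm : ∀ (s : ℕ) (n : ℤ), |Φ s n| ≤ |Φ s (m s)|) :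
    limsup (fun L : ℕ => (Set.ncard {s : ℕ | |m s| ≤ (L : ℤ)} : ℝ) / (2 * L + 1)) atTop = 1 ∧
    liminf (fun L : ℕ => (Set.ncard {s : ℕ | |m s| ≤ (L : ℤ)} : ℝ) / (2 * L + 1)) atTop = 1 := by
  have key : Tendsto (fun L : ℕ => (Set.ncard {s : ℕ | |m s| ≤ (L : ℤ)} : ℝ) / (2 * L + 1)) atTop (nhds 1) := by
    rw [Metric.tendsto_atTop]
    intro r hr
    set δ := min (r / 2) (1 / 2) with hδd
    have hδ : 0 < δ := by positivity
    have hδr : δ ≤ r / 2 := min_le_left _ _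
    have hδ1 : δ < 1 := (min_le_right _ _).trans_lt (by norm_num)
    obtain ⟨e, he, hfar⟩ := aux_far Φ ns γ hγ hSULE m hm δ hδ
    set B := 2 + (∑' s, ∑' n, e s n).toReal with hB
    obtain ⟨N, hN⟩ := exists_nat_gt (B / r)
    refine ⟨N, fun L hL => ?_⟩
    have hb := aux_bounds Φ m δ hδ hδ1 e he hfar L
    have hL' : (N : ℝ) ≤ L := by exact_mod_cast hL
    have hpos : (0:ℝ) < 2 * L + 1 := by positivity
    rw [Real.dist_eq, div_sub_one hpos.ne', abs_div, abs_of_pos hpos, div_lt_iff₀ hpos]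
    refine hb.trans_lt ?_
    have h1 : B < r * L := by
      have := hN.trans_le hL'
      rw [div_lt_iff₀ hr] at this
      linarith
    have h2 : 2 * δ * L ≤ r * L := by gcongr; linarith
    rw [add_assoc, ← hB]
    nlinarith
  exact ⟨key.limsup_eq, key.liminf_eq⟩
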